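/- arXiv:1603.03893 — 3 statements merged into one kernel-verified Lean document; each statement's English description precedes it below -/
import Mathlib

section
/- Let b be a basic D-sequence with ratios bounded by L (q_n ≤ L for all n ≥ 1), and let (x_n) be a sequence of integers such that x_n → 0 in the b-adic topology λ_b (meaning: for every m there exists N such that b_m divides x_n for all n ≥ N) and such that x_n ≠ 0 for infinitely many n. Then there exist strictly increasing sequences of natural numbers (n_j) and (m_j) such that n_{j+1} − n_j > j for all j, and for every j the image of x_{m_j} / b_{n_j + 1} in 𝕋 = ℝ/ℤ does not lie in 𝕋_L (i.e. the distance from the real number x_{m_j} / b_{n_j + 1} to the nearest integer is strictly greater than 1/(4L)). -/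
/-- A `D`-sequence: `b 0 = 1`, consecutive terms are distinct, and each term
divides the next. -/
def IsDSequence (b : ℕ → ℕ) : Prop :=
  b 0 = 1 ∧ (∀ n, b n ≠ b (n + 1)) ∧ ∀ n, b n ∣ b (n + 1)

/-- For a D-sequence, `q (j+1) = b (j+1) / b j`. -/
def qRatio (b : ℕ → ℕ) (j : ℕ) : ℕ := b (j + 1) / b j

/-- `𝕋_m`: the set of points of `𝕋 = ℝ/ℤ` at distance at most `1/(4m)` from `0`. -/
def Tm (m : ℕ) : Set (AddCircle (1 : ℝ)) := {x | ‖x‖ ≤ 1 / (4 * m)}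

theorem killing_aux (b : ℕ → ℕ) (hb : IsDSequence b)
    (hbasic : ∀ j, (qRatio b j).Prime) (L : ℕ) (hL : ∀ j, qRatio b j ≤ L)
    (x : ℕ → ℤ)
    (hconv : ∀ m : ℕ, ∃ N : ℕ, ∀ n ≥ N, (b m : ℤ) ∣ x n)
    (hnq : {n : ℕ | x n ≠ 0}.Infinite) (K M : ℕ) :
    ∃ p : ℕ × ℕ, K ≤ p.1 ∧ M ≤ p.2 ∧
      ((((x p.2 : ℝ) / (b (p.1 + 1) : ℝ) : ℝ)) : AddCircle (1 : ℝ)) ∉ Tm L := by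
  obtain ⟨h0, -, hdvd⟩ := hb
  have hmul : ∀ n, b (n + 1) = b n * qRatio b n := fun n =>
    (Nat.mul_div_cancel' (hdvd n)).symm
  have hpos : ∀ n, 0 < b n := by
    intro n
    induction n with
    | zero => omega
    | succ n ih => rw [hmul]; exact Nat.mul_pos ih (hbasic n).pos
  have hmono : StrictMono b := strictMono_nat_of_lt_succ fun n => by
    rw [hmul]; have := (hbasic n).two_le; nlinarith [hpos n]
  have hdle : ∀ i j, i ≤ j → b i ∣ b j := fun i j hij => by
    induction hij with
    | refl => exact dvd_rfl
    | step _ ih => exact ih.trans (hdvd _)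
  obtain ⟨N, hN⟩ := hconv K
  obtain ⟨m, hm0, hm⟩ := hnq.exists_gt (max N M)
  have hm0 : x m ≠ 0 := hm0
  have hK := hN m (by omega)
  have hex : ∃ k, ¬ (b k : ℤ) ∣ x m := by
    refine ⟨(x m).natAbs + 1, fun h => ?_⟩
    have h1 := Nat.le_of_dvd (Int.natAbs_pos.mpr hm0) (Int.natCast_dvd.mp h)
    have h2 := hmono.le_apply (x := (x m).natAbs + 1)
    omega
  classical
  obtain ⟨k, hk, hmin⟩ : ∃ k, ¬ (b k : ℤ) ∣ x m ∧ ∀ i < k, (b i : ℤ) ∣ x m :=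
    ⟨Nat.find hex, Nat.find_spec hex, fun i hi => not_not.mp (Nat.find_min hex hi)⟩
  have hkK : K < k := by
    by_contra hc
    exact hk ((Int.natCast_dvd_natCast.mpr (hdle k K (by omega))).trans hK)
  obtain ⟨n, rfl⟩ : ∃ n, k = n + 1 := ⟨k - 1, by omega⟩
  refine ⟨(n, m), by simp; omega, by simp; omega, ?_⟩
  obtain ⟨c, hc⟩ := hmin n (by omega)
  have hq := hbasic n
  have hqL := hL n
  have hmn := hmul n
  simp only [Tm, Set.mem_setOf_eq, not_le]
  rw [hmn] at hk ⊢
  set q := qRatio b n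
  have hbn : (0 : ℝ) < b n := by exact_mod_cast hpos n
  have hq0 : (0 : ℝ) < q := by exact_mod_cast hq.pos
  have hqL' : (q : ℝ) ≤ L := by exact_mod_cast hqL
  have heq : (x m : ℝ) / ((b n * q : ℕ) : ℝ) = c / q := by
    rw [hc]; push_cast; field_simp
  rw [heq, UnitAddCircle.norm_eq]
  set r := round ((c : ℝ) / q)
  have hne : c - r * q ≠ 0 := by
    intro h
    apply hk
    refine ⟨r, ?_⟩
    rw [hc]; push_cast; linear_combination (b n : ℤ) * h
  have h1 : (1 : ℝ) ≤ |(c : ℝ) - r * q| := by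
    exact_mod_cast Int.one_le_abs hne
  have h2 : (c : ℝ) / q - r = (c - r * q) / q := by field_simp
  rw [h2, abs_div, abs_of_pos hq0]
  calc (1 : ℝ) / (4 * L) < 1 / q := by
        apply one_div_lt_one_div_of_lt hq0; linarith
    _ ≤ _ := by gcongr

theorem killing_claim (b : ℕ → ℕ) (hb : IsDSequence b)
    (hbasic : ∀ j, (qRatio b j).Prime) (L : ℕ) (hL : ∀ j, qRatio b j ≤ L)
    (x : ℕ → ℤ)
    (hconv : ∀ m : ℕ, ∃ N : ℕ, ∀ n ≥ N, (b m : ℤ) ∣ x n)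
    (hnq : {n : ℕ | x n ≠ 0}.Infinite) :
    ∃ nseq mseq : ℕ → ℕ, StrictMono nseq ∧ StrictMono mseq ∧
      (∀ j, nseq (j + 1) - nseq j > j) ∧
      (∀ j, ((x (mseq j) : ℝ) / (b (nseq j + 1) : ℝ) : AddCircle (1 : ℝ)) ∉ Tm L) := by
  choose f hf1 hf2 hf3 using killing_aux b hb hbasic L hL x hconv hnq
  let s : ℕ → ℕ × ℕ := fun j =>
    Nat.rec (f 0 0) (fun j p => f (p.1 + j + 1) (p.2 + 1)) j
  have hs : ∀ j, s (j + 1) = f ((s j).1 + j + 1) ((s j).2 + 1) := fun j => rfl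
  have h1 : ∀ j, (s j).1 + j + 1 ≤ (s (j + 1)).1 := fun j => by
    rw [hs]; exact hf1 _ _
  have h2 : ∀ j, (s j).2 + 1 ≤ (s (j + 1)).2 := fun j => by
    rw [hs]; exact hf2 _ _
  refine ⟨fun j => (s j).1, fun j => (s j).2, strictMono_nat_of_lt_succ fun j => ?_,
    strictMono_nat_of_lt_succ fun j => ?_, fun j => ?_, fun j => ?_⟩
  · have := h1 j; omega
  · have := h2 j; omega
  · have := h1 j; show (s (j + 1)).1 - (s j).1 > j; omega
  · cases j with
    | zero => exact hf3 0 0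
    | succ j => exact hf3 _ _
end

section
/- Let k ∈ 𝕋 = ℝ/ℤ and let m, n be positive integers. If the elements k, 2k, …, mk all lie in 𝕋_+ and moreover m·k ∈ 𝕋_n, then k ∈ 𝕋_{nm}. -/
/-- `𝕋_+ = 𝕋_1`: the set of points of `𝕋 = ℝ/ℤ` at distance at most `1/4` from `0`. -/
def Tplus : Set (AddCircle (1 : ℝ)) := Tm 1

theorem lemma1_multiples_in_Tplus (k : AddCircle (1 : ℝ)) (m n : ℕ)
    (hm : 0 < m) (hn : 0 < n)
    (hmult : ∀ i : ℕ, 1 ≤ i → i ≤ m → i • k ∈ Tplus)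
    (hmk : m • k ∈ Tm n) :
    k ∈ Tm (n * m) := by
  obtain ⟨x, rfl, hx⟩ : ∃ x : ℝ, (x : AddCircle (1 : ℝ)) = k ∧ ‖k‖ = |x| := by
    induction k using QuotientAddGroup.induction_on with
    | H y =>
      refine ⟨y - round y, ?_, UnitAddCircle.norm_eq⟩
      have h : ((round y : ℝ) : AddCircle (1 : ℝ)) = 0 := by
        rw [AddCircle.coe_eq_zero_iff]
        exact ⟨round y, by simp⟩
      rw [AddCircle.coe_sub, h, sub_zero]
  have key : ∀ i : ℕ, (i : ℝ) * |x| ≤ 1 / 2 →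
      ‖i • (x : AddCircle (1 : ℝ))‖ = i * |x| := by
    intro i hi
    have h1 : |(i : ℝ) * x| = i * |x| := by rw [abs_mul, Nat.abs_cast]
    rw [← AddCircle.coe_nsmul, nsmul_eq_mul, ← h1]
    rw [AddCircle.norm_coe_eq_abs_iff (1 : ℝ) one_ne_zero, h1]
    simpa using hi
  have hT : ∀ i : ℕ, 1 ≤ i → i ≤ m → ‖i • (x : AddCircle (1 : ℝ))‖ ≤ 1 / 4 := by
    intro i h1 h2
    simpa [Tplus, Tm] using hmult i h1 h2
  have hx4 : |x| ≤ 1 / 4 := by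
    have := hT 1 le_rfl hm
    rwa [one_smul, hx] at this
  have hall : ∀ i : ℕ, i ≤ m → (i : ℝ) * |x| ≤ 1 / 4 := by
    intro i
    induction i with
    | zero => intro _; norm_num
    | succ i ih =>
      intro hi
      have h0 := ih (by omega)
      rw [← key (i + 1) (by push_cast; linarith)]
      exact hT (i + 1) (by omega) hi
  have hm4 := hall m le_rfl
  have h : ‖m • (x : AddCircle (1 : ℝ))‖ ≤ 1 / (4 * n) := hmk
  rw [key m (by linarith)] at h
  change ‖(x : AddCircle (1 : ℝ))‖ ≤ 1 / (4 * ((n * m : ℕ) : ℝ))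
  rw [hx]
  have hm' : (0 : ℝ) < m := by exact_mod_cast hm
  have hn' : (0 : ℝ) < n := by exact_mod_cast hn
  rw [le_div_iff₀ (by positivity)] at h ⊢
  push_cast
  linarith
end

section
/- Let b be a basic D-sequence with ratios bounded by L (q_n ≤ L for all n ≥ 1), let (x_n) be a sequence of integers with x_n ≠ 0 for infinitely many n and such that for every m there exists N with b_m dividing x_n for all n ≥ N (i.e. x_n → 0 in the b-adic topology λ_b). Then there exists a subsequence c = (b_{n_j + 1})_{j≥1} of b such that c_{j}/c_{j+1} ≤ 1/2^j for all j (in particular c_{j+1}/c_j → ∞) and such that for every j the distance from the real number x_{m_j} / b_{n_j+1} to the nearest integer exceeds 1/(4L) for suitable indices m_j; in particular the sequence (x_n) does not converge to 0 uniformly in the sense that sup_j ‖x_{m_j}/b_{n_j+1} mod ℤ‖ > 1/(4L). -/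
theorem killing_subsequence (b : ℕ → ℕ) (hb : IsDSequence b)
    (hbasic : ∀ j, (qRatio b j).Prime) (L : ℕ) (hL : ∀ j, qRatio b j ≤ L)
    (x : ℕ → ℤ)
    (hnq : {n : ℕ | x n ≠ 0}.Infinite)
    (hconv : ∀ m : ℕ, ∃ N : ℕ, ∀ n ≥ N, (b m : ℤ) ∣ x n) :
    ∃ nseq mseq : ℕ → ℕ, StrictMono nseq ∧
      (∀ j, (b (nseq j + 1) : ℝ) / (b (nseq (j + 1) + 1) : ℝ) ≤ 1 / 2 ^ j) ∧
      (∀ j, ‖(((x (mseq j) : ℝ) / (b (nseq j + 1) : ℝ) : ℝ) : AddCircle (1 : ℝ))‖ >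
        1 / (4 * L)) := by
  obtain ⟨h0, -, hd⟩ := hb
  have hq : ∀ n, b (n + 1) = b n * qRatio b n := fun n => (Nat.mul_div_cancel' (hd n)).symm
  have hpos : ∀ n, 0 < b n := by
    intro n
    induction n with
    | zero => omega
    | succ n ih => rw [hq]; exact Nat.mul_pos ih (hbasic n).pos
  have hgrow : ∀ a k, b a * 2 ^ k ≤ b (a + k) := by
    intro a k
    induction k with
    | zero => simp
    | succ k ih =>
      rw [← add_assoc, hq, pow_succ, ← mul_assoc]
      exact Nat.mul_le_mul ih (hbasic _).two_le
  have hdvd : ∀ a c, a ≤ c → b a ∣ b c := by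
    intro a c h
    induction h with
    | refl => exact dvd_rfl
    | step _ ih => exact ih.trans (hd _)
  have hmono : ∀ a c, a ≤ c → b a ≤ b c := fun a c h => Nat.le_of_dvd (hpos c) (hdvd a c h)
  have key : ∀ K, ∃ n ≥ K, ∃ m,
      ‖(((x m : ℝ) / (b (n + 1) : ℝ) : ℝ) : AddCircle (1 : ℝ))‖ > 1 / (4 * L) := by
    intro K
    obtain ⟨N, hN⟩ := hconv K
    obtain ⟨m, hm0, hmN⟩ := hnq.exists_gt N
    have hm0 : x m ≠ 0 := hm0
    have hKm := hN m hmN.le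
    have hex : ∃ n, ¬ ((b n : ℤ) ∣ x m) := by
      refine ⟨(x m).natAbs, fun h => ?_⟩
      have h1 : b (x m).natAbs ∣ (x m).natAbs := Int.natCast_dvd.mp h
      have h2 := Nat.le_of_dvd (Int.natAbs_pos.mpr hm0) h1
      have h3 := hgrow 0 (x m).natAbs
      rw [h0, one_mul, zero_add] at h3
      have h4 := Nat.lt_two_pow_self (n := (x m).natAbs)
      omega
    classical
    have hspec := Nat.find_spec hex
    have hmin := fun k => Nat.find_min hex (m := k)
    generalize Nat.find hex = t at hspec hmin
    have hKt : K < t := by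
      by_contra hc
      exact hspec ((Int.natCast_dvd_natCast.mpr (hdvd t K (not_lt.mp hc))).trans hKm)
    obtain ⟨n, rfl⟩ : ∃ n, t = n + 1 := ⟨t - 1, by omega⟩
    refine ⟨n, by omega, m, ?_⟩
    have hn : (b n : ℤ) ∣ x m := not_not.mp (hmin n (by omega))
    rw [AddCircle.norm_eq]
    generalize round ((1:ℝ)⁻¹ * ((x m : ℝ) / (b (n + 1) : ℝ))) = r
    have hbp : (0:ℝ) < b (n + 1) := by exact_mod_cast hpos _
    have e : (x m : ℝ) / (b (n + 1) : ℝ) - r * 1 = ((x m - r * b (n + 1) : ℤ) : ℝ) / b (n + 1) := by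
      push_cast
      field_simp
    have hle : (b n : ℤ) ≤ |x m - r * b (n + 1)| := by
      apply Int.le_of_dvd
      · rw [abs_pos]
        intro h
        exact hspec ⟨r, by linarith⟩
      · rw [dvd_abs]
        exact dvd_sub hn (Dvd.dvd.mul_left (Int.natCast_dvd_natCast.mpr (hd n)) _)
    have hle' : (b n : ℝ) ≤ |((x m - r * b (n + 1) : ℤ) : ℝ)| := by exact_mod_cast hle
    rw [e, abs_div, abs_of_pos hbp, gt_iff_lt]
    have hLp : (0:ℝ) < L := by exact_mod_cast (hbasic 0).pos.trans_le (hL 0)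
    have hbn : (0:ℝ) < b n := by exact_mod_cast hpos _
    have hbL : (b (n + 1) : ℝ) ≤ b n * L := by
      rw [hq]
      exact_mod_cast Nat.mul_le_mul_left _ (hL n)
    rw [div_lt_div_iff₀ (by positivity) hbp]
    nlinarith [mul_le_mul_of_nonneg_right hle' hLp.le, mul_pos hbn hLp]
  choose f hf hQ using key
  let ns : ℕ → ℕ := fun j => Nat.rec (f 0) (fun j p => f (p + j + 1)) j
  have hs : ∀ j, ns (j + 1) = f (ns j + j + 1) := fun j => rfl
  have hstep : ∀ j, ns j + j + 1 ≤ ns (j + 1) := fun j => by rw [hs]; exact hf _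
  have hns : ∀ j, ∃ K, ns j = f K := by
    intro j
    cases j with
    | zero => exact ⟨0, rfl⟩
    | succ j => exact ⟨_, hs j⟩
  have hQ' : ∀ j, ∃ m,
      ‖(((x m : ℝ) / (b (ns j + 1) : ℝ) : ℝ) : AddCircle (1 : ℝ))‖ > 1 / (4 * L) := by
    intro j
    obtain ⟨K, hK⟩ := hns j
    rw [hK]
    exact hQ K
  choose ms hms using hQ'
  refine ⟨ns, ms, strictMono_nat_of_lt_succ fun j => by have := hstep j; omega, fun j => ?_, hms⟩
  have h1 : b (ns j + 1) * 2 ^ j ≤ b (ns (j + 1) + 1) :=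
    (hgrow _ _).trans (hmono _ _ (by have := hstep j; omega))
  have h2 : (0:ℝ) < b (ns (j + 1) + 1) := by exact_mod_cast hpos _
  rw [div_le_div_iff₀ h2 (by positivity), one_mul]
  exact_mod_cast h1
end
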